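/- There exist ε > 0 and C > 0 such that for every Δt ∈ (0, ε) and every i ∈ {1,…,k}, the quantities A_i(Δt) := (1−ρ_iΔt)(1−φ_i(Δt))²γ_iΔt / (1 − (1−ρ_iΔt)(1−φ_i(Δt))²) and C_i(Δt) := (1−ρ_iΔt)(β_i(Δt)(1−φ_i(Δt))(A_i(Δt)+γ_iΔt) + φ_i(Δt)(1−λ(Δt)β_Σ(Δt))) are well defined (the denominator in A_i is nonzero) and satisfy |A_i(Δt) − (k^{1/4}/(2(1+k)^{1/2}))·γ_i^{1/2}(σ_S/σ_K)^{1/2}·√Δt| ≤ C·Δt and |C_i(Δt) − (3/(2k^{1/4}(1+k)^{1/2}))·γ_i^{1/2}(σ_K/σ_S)^{1/2}·√Δt| ≤ C·Δt. -/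

import Mathlib

/-!
In the variables `x_i = β_i β_Σ σ_S² / σ_K² ∈ (0, 1]` and `d = √Δt`, the `i`-th equation reads
`(1 - x_i)² = d² g_i(x)`, with `g_i` smooth and positive near `x = (1, …, 1)`. Taking square roots,
it becomes `x_i + d √(g_i(x)) = 1`, a system whose derivative in `x` at `d = 0` is the identity: by
the implicit function theorem its solutions near `(0, 1)` form a differentiable curve `d ↦ x(d)`.
Since the `g_i` are bounded above on all equilibria, every equilibrium tends to `1` as `d → 0`,
so it eventually lies on that curve. Finally `A_i` and `C_i` are `d` times smooth functions of
`(d, x)`, hence agree with `d` times their value at `(0, 1)` up to `O(d²) = O(Δt)`.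
-/

open Filter Topology

theorem exists_curve_add_smul_eq {𝕜 E : Type*} [NontriviallyNormedField 𝕜] [CompleteSpace 𝕜]
    [NormedAddCommGroup E] [NormedSpace 𝕜 E] [CompleteSpace E] {H : E → E} {H' : E →L[𝕜] E} {x₀ : E}
    (hH : HasStrictFDerivAt H H' x₀) :
    ∃ x : 𝕜 → E, x 0 = x₀ ∧ DifferentiableAt 𝕜 x 0 ∧
      ∀ᶠ p : 𝕜 × E in 𝓝 (0, x₀), p.2 + p.1 • H p.2 = x₀ ↔ p.2 = x p.1 := by
  obtain ⟨F', hF, hF'⟩ : ∃ F' : 𝕜 × E →L[𝕜] E,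
      HasStrictFDerivAt (fun p : 𝕜 × E => p.2 + p.1 • H p.2) F' (0, x₀) ∧
        F' ∘L .inr 𝕜 𝕜 E = .id 𝕜 E := by
    refine ⟨_, hasStrictFDerivAt_snd.add
      (hasStrictFDerivAt_fst.smul (hH.comp (0, x₀) hasStrictFDerivAt_snd)), ?_⟩
    ext v
    simp
  have hinv : (F' ∘L .inr 𝕜 𝕜 E).IsInvertible := hF' ▸ ⟨.refl 𝕜 E, rfl⟩
  have hiff := hF.eventually_apply_eq_iff_implicitFunctionOfProdDomain hinv
  simp only [zero_smul, add_zero] at hiff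
  exact ⟨hF.implicitFunctionOfProdDomain hinv, hiff.self_of_nhds.1 (by simp),
    (hF.hasStrictFDerivAt_implicitFunctionOfProdDomain hinv).differentiableAt,
    hiff.mono fun p hp => hp.trans eq_comm⟩

lemma tendsto_prodMk_nhdsGT_zero {E : Type*} [TopologicalSpace E] {x : ℝ → E} {x₀ : E}
    (hx0 : x 0 = x₀) (hx : ContinuousAt x 0) :
    Tendsto (fun d => (d, x d)) (𝓝[>] 0) (𝓝 (0, x₀)) :=
  hx0 ▸ (continuousAt_id.prodMk hx).tendsto.mono_left nhdsWithin_le_nhds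

lemma exists_pos_eventually_abs_mul_sub_le {E ι : Type*} [NormedAddCommGroup E] [NormedSpace ℝ E]
    [Finite ι] {F : ℝ × E → ι → ℝ} {x : ℝ → E} {x₀ : E} (hF : DifferentiableAt ℝ F (0, x₀))
    (hx0 : x 0 = x₀) (hx : DifferentiableAt ℝ x 0) :
    ∃ C > 0, ∀ᶠ d in 𝓝[>] 0, ∀ i, |d * F (d, x d) i - d * F (0, x₀) i| ≤ C * d ^ 2 := by
  subst hx0
  have := Fintype.ofFinite ι
  have hcomp : DifferentiableAt ℝ (fun d => F (d, x d)) 0 :=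
    hF.fun_comp' 0 (differentiableAt_id.prodMk hx)
  obtain ⟨C, hC, hbound⟩ := hcomp.isBigO_sub.exists_pos
  refine ⟨C, hC, ?_⟩
  filter_upwards [hbound.bound.filter_mono nhdsWithin_le_nhds, self_mem_nhdsWithin] with d hd hd0 i
  have hd0 : 0 < d := hd0
  have hi : |F (d, x d) i - F (0, x 0) i| ≤ C * d := by
    simpa [abs_of_pos hd0] using (norm_le_pi_norm _ i).trans hd
  calc |d * F (d, x d) i - d * F (0, x 0) i| = d * |F (d, x d) i - F (0, x 0) i| := by
        rw [← mul_sub, abs_mul, abs_of_pos hd0]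
    _ ≤ d * (C * d) := by gcongr
    _ = C * d ^ 2 := by ring

section Equilibrium

variable {ι : Type*} [Fintype ι]

/-- The constrained equilibrium system at time step `Δt`, in the unknown `q = (β_Σ, β)`. -/
def IsEquilibrium (σS σK : ℝ) (γ ρ : ι → ℝ) (Δt : ℝ) (q : ℝ × (ι → ℝ)) : Prop :=
  q.1 = ∑ j, q.2 j ∧
    (∀ i, 0 = (1 - ρ i * Δt) * (q.2 i) ^ 2 * q.1 ^ 2
        - (2 - ρ i * Δt + q.1 * γ i * Δt) * (σK / σS) ^ 2 * q.2 i * q.1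
        + (σK / σS) ^ 4 * (1 - q.2 i * γ i * Δt)) ∧
    0 < q.1 ∧
    (∀ i, 0 < q.2 i * q.1 ∧ q.2 i * q.1 ≤ σK ^ 2 / σS ^ 2)

/-- The aggregate intensity `β_Σ σ_S / σ_K`, in terms of the scaled unknowns
`x_i = β_i β_Σ σ_S² / σ_K²`; it is `√(∑ x_j)` because the `β_j` sum to `β_Σ`. -/
noncomputable def aggregate (x : ι → ℝ) : ℝ := √(∑ j, x j)

/-- The value of `(1 - x_i)² / Δt` imposed by the `i`-th equilibrium equation once it is written
in the scaled unknowns `x`, with `s = σ_K / σ_S`. -/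
noncomputable def gapSq (s : ℝ) (γ ρ x : ι → ℝ) (i : ι) : ℝ :=
  s * γ i * (aggregate x + (aggregate x)⁻¹) * x i - ρ i * x i * (1 - x i)

/-- The value of `(1 - x_i) / √Δt` at an equilibrium. -/
noncomputable def gapRate (s : ℝ) (γ ρ x : ι → ℝ) (i : ι) : ℝ := √(gapSq s γ ρ x i)

/-- The constrained equilibrium system in the scaled unknowns `x_i = β_i β_Σ / s²`, where
`s = σ_K / σ_S`. -/
def IsScaledEquilibrium (s : ℝ) (γ ρ : ι → ℝ) (Δt : ℝ) (x : ι → ℝ) : Prop :=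
  ∀ i, 0 < x i ∧ x i ≤ 1 ∧ (1 - x i) ^ 2 = Δt * gapSq s γ ρ x i

/-- The intensities `(β_Σ, β)` recovered from the scaled unknowns `x`, with `s = σ_K / σ_S`. -/
noncomputable def unscale (s : ℝ) (x : ι → ℝ) : ℝ × (ι → ℝ) :=
  (s * aggregate x, fun i => s * x i / aggregate x)

variable {s σS σK Δt : ℝ} {γ ρ x : ι → ℝ}

lemma aggregate_sq_of_nonneg (hx : ∀ i, 0 ≤ x i) : aggregate x ^ 2 = ∑ i, x i :=
  Real.sq_sqrt (Finset.sum_nonneg fun i _ => hx i)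

lemma aggregate_pos [Nonempty ι] (hx : ∀ i, 0 < x i) : 0 < aggregate x :=
  Real.sqrt_pos.2 (Finset.sum_pos (fun i _ => hx i) Finset.univ_nonempty)

lemma IsScaledEquilibrium.isEquilibrium_unscale [Nonempty ι] (hσS : 0 < σS) (hσK : 0 < σK)
    (h : IsScaledEquilibrium (σK / σS) γ ρ Δt x) :
    IsEquilibrium σS σK γ ρ Δt (unscale (σK / σS) x) := by
  have hb := aggregate_pos fun i => (h i).1
  have hsum := aggregate_sq_of_nonneg fun i => (h i).1.le
  have hs : 0 < σK / σS := by positivity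
  have hprod (i : ι) : σK / σS * x i / aggregate x * (σK / σS * aggregate x) =
      (σK / σS) ^ 2 * x i := by field_simp
  simp only [IsEquilibrium, unscale, hprod, ← div_pow]
  refine ⟨?_, fun i => ?_, by positivity, fun i => ⟨by have := (h i).1; positivity, ?_⟩⟩
  · rw [← Finset.sum_div, ← Finset.mul_sum, ← hsum]
    field_simp
  · have hi := (h i).2.2
    unfold gapSq at hi
    generalize σK / σS = s at *
    field_simp at hi ⊢
    linear_combination -s ^ 4 * hi
  · exact mul_le_of_le_one_right (by positivity) (h i).2.1

lemma IsEquilibrium.exists_eq_unscale (hσS : 0 < σS) (hσK : 0 < σK) {q : ℝ × (ι → ℝ)}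
    (h : IsEquilibrium σS σK γ ρ Δt q) :
    ∃ x, IsScaledEquilibrium (σK / σS) γ ρ Δt x ∧ q = unscale (σK / σS) x := by
  obtain ⟨B, β⟩ := q
  obtain ⟨hsum, heq, hB, hβ⟩ := h
  have hs : 0 < σK / σS := by positivity
  simp only [← div_pow] at hsum heq hB hβ
  generalize σK / σS = s at *
  have hagg : aggregate (fun i => β i * B / s ^ 2) = B / s := by
    rw [aggregate, ← Finset.sum_div, ← Finset.sum_mul, ← hsum, ← sq, ← div_pow,
      Real.sqrt_sq (by positivity)]
  refine ⟨fun i => β i * B / s ^ 2, fun i => ⟨div_pos (hβ i).1 (by positivity),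
    div_le_one_of_le₀ (hβ i).2 (by positivity), ?_⟩, ?_⟩
  · have hi := heq i
    rw [gapSq, hagg]
    field_simp
    linear_combination -hi
  · ext i
    · simp only [unscale, hagg]; field_simp
    · simp only [unscale, hagg]; field_simp

lemma isEquilibrium_iff_exists_eq_unscale [Nonempty ι] (hσS : 0 < σS) (hσK : 0 < σK)
    {q : ℝ × (ι → ℝ)} :
    IsEquilibrium σS σK γ ρ Δt q ↔
      ∃ x, IsScaledEquilibrium (σK / σS) γ ρ Δt x ∧ q = unscale (σK / σS) x := by
  refine ⟨fun h => h.exists_eq_unscale hσS hσK, ?_⟩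
  rintro ⟨x, hx, rfl⟩
  exact hx.isEquilibrium_unscale hσS hσK

lemma IsScaledEquilibrium.one_sub_eq {d : ℝ} (hd : 0 < d)
    (h : IsScaledEquilibrium s γ ρ (d ^ 2) x) (i : ι) : 1 - x i = d * gapRate s γ ρ x i := by
  rw [gapRate, ← Real.sqrt_sq hd.le, ← Real.sqrt_mul (sq_nonneg d), ← (h i).2.2,
    Real.sqrt_sq (sub_nonneg.2 (h i).2.1)]

lemma isScaledEquilibrium_sq_iff {d : ℝ} (hd : 0 < d) (hx : ∀ i, 0 < x i)
    (hgap : ∀ i, 0 ≤ gapSq s γ ρ x i) :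
    IsScaledEquilibrium s γ ρ (d ^ 2) x ↔ x + d • gapRate s γ ρ x = 1 := by
  refine ⟨fun h => funext fun i => ?_, fun h i => ?_⟩
  · simp [← h.one_sub_eq hd i]
  · have hi : x i + d * √(gapSq s γ ρ x i) = 1 := congrFun h i
    refine ⟨hx i, ?_, ?_⟩
    · rw [← hi]
      exact le_add_of_nonneg_right (by positivity)
    · rw [← eq_sub_iff_add_eq'.2 hi, mul_pow, Real.sq_sqrt (hgap i)]

lemma IsScaledEquilibrium.gapSq_le [Nonempty ι] (hs : 0 ≤ s) (hγ : ∀ i, 0 ≤ γ i)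
    (h : IsScaledEquilibrium s γ ρ Δt x) (i : ι) :
    gapSq s γ ρ x i ≤ s * γ i * (2 * √(Fintype.card ι)) + |ρ i| := by
  have hb := aggregate_pos fun i => (h i).1
  have hb_le : aggregate x ≤ √(Fintype.card ι) := by
    refine Real.sqrt_le_sqrt ((Finset.sum_le_sum fun i _ => (h i).2.1).trans_eq ?_)
    simp
  have hx_le : x i ≤ aggregate x ^ 2 := by
    rw [aggregate_sq_of_nonneg fun i => (h i).1.le]
    exact Finset.single_le_sum (fun j _ => (h j).1.le) (Finset.mem_univ i)
  obtain ⟨hx0, hx1, -⟩ := h i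
  have hinv : (aggregate x)⁻¹ * x i ≤ aggregate x := by
    rw [inv_mul_le_iff₀ hb, ← sq]
    exact hx_le
  have hmul : (aggregate x + (aggregate x)⁻¹) * x i ≤ 2 * √(Fintype.card ι) := by
    have := mul_le_of_le_one_right hb.le hx1
    linarith
  have hρ : -(ρ i * x i * (1 - x i)) ≤ |ρ i| := by
    refine (neg_le_abs _).trans ?_
    rw [mul_assoc, abs_mul]
    refine mul_le_of_le_one_right (abs_nonneg _) (abs_le.2 ⟨?_, ?_⟩) <;> nlinarith
  have := mul_le_mul_of_nonneg_left hmul (mul_nonneg hs (hγ i))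
  rw [gapSq, mul_assoc (s * γ i)]
  linarith

lemma tendsto_one_of_isScaledEquilibrium [Nonempty ι] (hs : 0 ≤ s) (hγ : ∀ i, 0 ≤ γ i)
    {α : Type*} {l : Filter α} {Δ : α → ℝ} {x : α → ι → ℝ} (hΔ : Tendsto Δ l (𝓝 0))
    (hΔ0 : ∀ᶠ a in l, 0 ≤ Δ a)
    (h : ∀ᶠ a in l, IsScaledEquilibrium s γ ρ (Δ a) (x a)) : Tendsto x l (𝓝 1) := by
  refine tendsto_pi_nhds.2 fun i => ?_
  set M := s * γ i * (2 * √(Fintype.card ι)) + |ρ i|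
  have hlim : Tendsto (fun a => √(Δ a * M)) l (𝓝 0) := by
    simpa using (hΔ.mul_const M).sqrt
  refine tendsto_iff_dist_tendsto_zero.2 (squeeze_zero' (by simp) ?_ hlim)
  filter_upwards [hΔ0, h] with a ha hx
  rw [dist_comm, Real.dist_eq, Pi.one_apply]
  refine Real.abs_le_sqrt ?_
  rw [(hx i).2.2]
  exact mul_le_mul_of_nonneg_left (hx.gapSq_le hs hγ i) ha

lemma aggregate_one : aggregate (1 : ι → ℝ) = √(Fintype.card ι) := by
  simp [aggregate]

lemma gapSq_one_pos [Nonempty ι] (hs : 0 < s) (hγ : ∀ i, 0 < γ i) (i : ι) :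
    0 < gapSq s γ ρ 1 i := by
  have hi := hγ i
  simp only [gapSq, aggregate_one, Pi.one_apply, sub_self, mul_zero, sub_zero, mul_one]
  positivity

lemma contDiffAt_aggregate_one [Nonempty ι] : ContDiffAt ℝ 1 (aggregate (ι := ι)) 1 :=
  ContDiffAt.sqrt (by fun_prop) (by simp)

lemma contDiffAt_gapSq_one [Nonempty ι] (i : ι) :
    ContDiffAt ℝ 1 (fun x => gapSq s γ ρ x i) 1 := by
  have hagg := contDiffAt_aggregate_one (ι := ι)
  have hne : aggregate (1 : ι → ℝ) ≠ 0 := (aggregate_pos fun _ => one_pos).ne'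
  unfold gapSq
  fun_prop (disch := assumption)

lemma contDiffAt_gapRate_one [Nonempty ι] (hs : 0 < s) (hγ : ∀ i, 0 < γ i) :
    ContDiffAt ℝ 1 (gapRate s γ ρ) 1 :=
  contDiffAt_pi.2 fun i => (contDiffAt_gapSq_one i).sqrt (gapSq_one_pos hs hγ i).ne'

lemma eventually_isScaledEquilibrium_sq_iff [Nonempty ι] (hs : 0 < s) (hγ : ∀ i, 0 < γ i) :
    ∀ᶠ p : ℝ × (ι → ℝ) in 𝓝 (0, 1), 0 < p.1 →
      (IsScaledEquilibrium s γ ρ (p.1 ^ 2) p.2 ↔ p.2 + p.1 • gapRate s γ ρ p.2 = 1) := by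
  have hpos : ∀ᶠ x : ι → ℝ in 𝓝 1, ∀ i, 0 < x i := eventually_all.2 fun i =>
    (continuousAt_apply i _).eventually_const_lt one_pos
  have hgap : ∀ᶠ x : ι → ℝ in 𝓝 1, ∀ i, 0 < gapSq s γ ρ x i := eventually_all.2 fun i =>
    (contDiffAt_gapSq_one i).continuousAt.eventually_const_lt (gapSq_one_pos hs hγ i)
  filter_upwards [continuousAt_snd.eventually hpos, continuousAt_snd.eventually hgap]
    with p hp hp' hd
  exact isScaledEquilibrium_sq_iff hd hp fun i => (hp' i).le

lemma eventually_forall_isScaledEquilibrium [Nonempty ι] (hs : 0 ≤ s) (hγ : ∀ i, 0 ≤ γ i)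
    {P : ℝ × (ι → ℝ) → Prop} (hP : ∀ᶠ p in 𝓝 (0, 1), P p) :
    ∀ᶠ d in 𝓝[>] 0, ∀ x, IsScaledEquilibrium s γ ρ (d ^ 2) x → P (d, x) := by
  let l : Filter (ℝ × (ι → ℝ)) :=
    comap Prod.fst (𝓝[>] 0) ⊓ 𝓟 {p | IsScaledEquilibrium s γ ρ (p.1 ^ 2) p.2}
  have hfst : Tendsto Prod.fst l (𝓝 0) :=
    (tendsto_comap.mono_left inf_le_left).mono_right nhdsWithin_le_nhds
  have hsnd : Tendsto Prod.snd l (𝓝 1) :=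
    tendsto_one_of_isScaledEquilibrium hs hγ (by simpa using hfst.pow 2)
      (.of_forall fun p => sq_nonneg p.1) (mem_inf_of_right (mem_principal_self _))
  have hl := eventually_comap.1 (eventually_inf_principal.1 ((hfst.prodMk_nhds hsnd).eventually hP))
  filter_upwards [hl] with d hd x hx using hd (d, x) rfl hx

theorem exists_curve_isScaledEquilibrium_iff [Nonempty ι] (hs : 0 < s) (hγ : ∀ i, 0 < γ i)
    (ρ : ι → ℝ) :
    ∃ x : ℝ → ι → ℝ, x 0 = 1 ∧ DifferentiableAt ℝ x 0 ∧
      ∀ᶠ d in 𝓝[>] 0, ∀ y, IsScaledEquilibrium s γ ρ (d ^ 2) y ↔ y = x d := by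
  obtain ⟨x, hx0, hx, hiff⟩ := exists_curve_add_smul_eq
    ((contDiffAt_gapRate_one (ρ := ρ) hs hγ).hasStrictFDerivAt one_ne_zero)
  have hlocal := (eventually_isScaledEquilibrium_sq_iff (ρ := ρ) hs hγ).and hiff
  have hcurve := tendsto_prodMk_nhdsGT_zero hx0 hx.continuousAt
  refine ⟨x, hx0, hx, ?_⟩
  filter_upwards [self_mem_nhdsWithin, hcurve.eventually hlocal,
    eventually_forall_isScaledEquilibrium hs.le (fun i => (hγ i).le) hlocal]
    with d hd hx_sol huniq y
  refine ⟨fun hy => ?_, ?_⟩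
  · obtain ⟨hscaled, hon_curve⟩ := huniq y hy
    exact hon_curve.1 ((hscaled hd).1 hy)
  · rintro rfl
    exact (hx_sol.1 hd).2 (hx_sol.2.2 rfl)

/-- The price impact `λ`, as a function of `β_Σ`. -/
noncomputable def priceImpact (σS σK βSum : ℝ) : ℝ :=
  βSum * σS ^ 2 / (σK ^ 2 + βSum ^ 2 * σS ^ 2)

/-- The inventory mean-reversion parameter `φ_i` at `q = (β_Σ, β)`. -/
noncomputable def meanReversion (σS σK : ℝ) (q : ℝ × (ι → ℝ)) (i : ι) : ℝ :=
  1 - priceImpact σS σK q.1 * q.2 i / (1 - priceImpact σS σK q.1 * q.1)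

/-- The factor `(1 - ρ_i Δt) (1 - φ_i)²` by which the discounted squared inventory of HFT `i`
decays over one period, at `q = (β_Σ, β)`. -/
noncomputable def discountedSqDecay (σS σK : ℝ) (ρ : ι → ℝ) (Δt : ℝ) (q : ℝ × (ι → ℝ)) (i : ι) :
    ℝ :=
  (1 - ρ i * Δt) * (1 - meanReversion σS σK q i) ^ 2

/-- The value-function coefficient `A_i` at `q = (β_Σ, β)`; it is meaningful only where the
denominator `1 - discountedSqDecay σS σK ρ Δt q i` is nonzero. -/
noncomputable def coeffA (σS σK : ℝ) (γ ρ : ι → ℝ) (Δt : ℝ) (q : ℝ × (ι → ℝ)) (i : ι) : ℝ :=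
  discountedSqDecay σS σK ρ Δt q i * γ i * Δt / (1 - discountedSqDecay σS σK ρ Δt q i)

/-- The value-function coefficient `C_i` at `q = (β_Σ, β)`. -/
noncomputable def coeffC (σS σK : ℝ) (γ ρ : ι → ℝ) (Δt : ℝ) (q : ℝ × (ι → ℝ)) (i : ι) : ℝ :=
  (1 - ρ i * Δt) *
    (q.2 i * (1 - meanReversion σS σK q i) * (coeffA σS σK γ ρ Δt q i + γ i * Δt) +
      meanReversion σS σK q i * (1 - priceImpact σS σK q.1 * q.1))

/-- At an equilibrium with `Δt = d²`, the denominator of `A_i` divided by `d`; this extension to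
`d = 0` is smooth. -/
noncomputable def lossRate (s : ℝ) (γ ρ : ι → ℝ) (d : ℝ) (x : ι → ℝ) (i : ι) : ℝ :=
  gapRate s γ ρ x i * (1 + x i) + ρ i * d * x i ^ 2

/-- At an equilibrium with `Δt = d²`, the coefficient `A_i` divided by `d`. -/
noncomputable def rateA (s : ℝ) (γ ρ : ι → ℝ) (d : ℝ) (x : ι → ℝ) (i : ι) : ℝ :=
  (1 - ρ i * d ^ 2) * x i ^ 2 * γ i / lossRate s γ ρ d x i

/-- At an equilibrium with `Δt = d²`, the coefficient `C_i` divided by `d`. -/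
noncomputable def rateC (s : ℝ) (γ ρ : ι → ℝ) (d : ℝ) (x : ι → ℝ) (i : ι) : ℝ :=
  (1 - ρ i * d ^ 2) * (s * x i ^ 2 / aggregate x * (rateA s γ ρ d x i + γ i * d) +
    gapRate s γ ρ x i / (1 + aggregate x ^ 2))

lemma one_sub_priceImpact_mul (hσS : σS ≠ 0) (hσK : σK ≠ 0) :
    1 - priceImpact σS σK (unscale (σK / σS) x).1 * (unscale (σK / σS) x).1 =
      1 / (1 + aggregate x ^ 2) := by
  have : 1 + aggregate x ^ 2 ≠ 0 := by positivity
  simp only [priceImpact, unscale]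
  field_simp
  ring

lemma meanReversion_unscale (hσS : σS ≠ 0) (hσK : σK ≠ 0) (hx : aggregate x ≠ 0) (i : ι) :
    meanReversion σS σK (unscale (σK / σS) x) i = 1 - x i := by
  rw [meanReversion, one_sub_priceImpact_mul hσS hσK]
  have : 1 + aggregate x ^ 2 ≠ 0 := by positivity
  simp only [priceImpact, unscale]
  field_simp

section Rates

variable {d : ℝ} [Nonempty ι]

lemma IsScaledEquilibrium.one_sub_discountedSqDecay (hσS : σS ≠ 0) (hσK : σK ≠ 0) (hd : 0 < d)
    (h : IsScaledEquilibrium (σK / σS) γ ρ (d ^ 2) x) (i : ι) :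
    1 - discountedSqDecay σS σK ρ (d ^ 2) (unscale (σK / σS) x) i =
      d * lossRate (σK / σS) γ ρ d x i := by
  have hb := (aggregate_pos fun i => (h i).1).ne'
  rw [discountedSqDecay, meanReversion_unscale hσS hσK hb, lossRate]
  linear_combination (1 + x i) * h.one_sub_eq hd i

lemma IsScaledEquilibrium.coeffA_eq (hσS : σS ≠ 0) (hσK : σK ≠ 0) (hd : 0 < d)
    (h : IsScaledEquilibrium (σK / σS) γ ρ (d ^ 2) x) (i : ι) :
    coeffA σS σK γ ρ (d ^ 2) (unscale (σK / σS) x) i = d * rateA (σK / σS) γ ρ d x i := by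
  have hb := (aggregate_pos fun i => (h i).1).ne'
  rw [coeffA, h.one_sub_discountedSqDecay hσS hσK hd, discountedSqDecay,
    meanReversion_unscale hσS hσK hb, rateA, sub_sub_cancel]
  field_simp

lemma IsScaledEquilibrium.coeffC_eq (hσS : σS ≠ 0) (hσK : σK ≠ 0) (hd : 0 < d)
    (h : IsScaledEquilibrium (σK / σS) γ ρ (d ^ 2) x) (i : ι) :
    coeffC σS σK γ ρ (d ^ 2) (unscale (σK / σS) x) i = d * rateC (σK / σS) γ ρ d x i := by
  have hb := (aggregate_pos fun i => (h i).1).ne'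
  rw [coeffC, h.coeffA_eq hσS hσK hd, one_sub_priceImpact_mul hσS hσK,
    meanReversion_unscale hσS hσK hb, rateC, unscale]
  linear_combination (1 - ρ i * d ^ 2) / (1 + aggregate x ^ 2) * h.one_sub_eq hd i

lemma contDiffAt_gapRate_snd (hs : 0 < s) (hγ : ∀ i, 0 < γ i) (i : ι) :
    ContDiffAt ℝ 1 (fun p : ℝ × (ι → ℝ) => gapRate s γ ρ p.2 i) (0, 1) :=
  ContDiffAt.snd'' (f := fun x => gapRate s γ ρ x i) (x := (0, 1))
    (contDiffAt_pi.1 (contDiffAt_gapRate_one hs hγ) i)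

lemma contDiffAt_lossRate_zero_one (hs : 0 < s) (hγ : ∀ i, 0 < γ i) (i : ι) :
    ContDiffAt ℝ 1 (fun p : ℝ × (ι → ℝ) => lossRate s γ ρ p.1 p.2 i) (0, 1) := by
  have hgap := contDiffAt_gapRate_snd (ρ := ρ) hs hγ i
  unfold lossRate
  fun_prop

lemma lossRate_zero_one_pos (hs : 0 < s) (hγ : ∀ i, 0 < γ i) (i : ι) :
    0 < lossRate s γ ρ 0 1 i := by
  have := Real.sqrt_pos.2 (gapSq_one_pos (ρ := ρ) hs hγ i)
  simpa [lossRate, gapRate]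

lemma eventually_lossRate_pos (hs : 0 < s) (hγ : ∀ i, 0 < γ i) :
    ∀ᶠ p : ℝ × (ι → ℝ) in 𝓝 (0, 1), ∀ i, 0 < lossRate s γ ρ p.1 p.2 i :=
  eventually_all.2 fun i => (contDiffAt_lossRate_zero_one hs hγ i).continuousAt.eventually_const_lt
    (lossRate_zero_one_pos hs hγ i)

lemma contDiffAt_rateA_zero_one (hs : 0 < s) (hγ : ∀ i, 0 < γ i) :
    ContDiffAt ℝ 1 (fun p : ℝ × (ι → ℝ) => rateA s γ ρ p.1 p.2) (0, 1) := by
  refine contDiffAt_pi.2 fun i => ?_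
  have hloss := contDiffAt_lossRate_zero_one (ρ := ρ) hs hγ i
  have hne := (lossRate_zero_one_pos (ρ := ρ) hs hγ i).ne'
  unfold rateA
  fun_prop (disch := assumption)

lemma contDiffAt_rateC_zero_one (hs : 0 < s) (hγ : ∀ i, 0 < γ i) :
    ContDiffAt ℝ 1 (fun p : ℝ × (ι → ℝ) => rateC s γ ρ p.1 p.2) (0, 1) := by
  refine contDiffAt_pi.2 fun i => ?_
  have hA := contDiffAt_pi.1 (contDiffAt_rateA_zero_one (ρ := ρ) hs hγ) i
  have hgap := contDiffAt_gapRate_snd (ρ := ρ) hs hγ i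
  have hagg : ContDiffAt ℝ 1 (fun p : ℝ × (ι → ℝ) => aggregate p.2) (0, 1) :=
    contDiffAt_aggregate_one.snd''
  have hne : aggregate (1 : ι → ℝ) ≠ 0 := (aggregate_pos fun _ => one_pos).ne'
  have hne' : 1 + aggregate (1 : ι → ℝ) ^ 2 ≠ 0 := by positivity
  unfold rateC
  fun_prop (disch := assumption)

end Rates

lemma rpow_one_fourth {a : ℝ} (ha : 0 ≤ a) : a ^ ((1 : ℝ) / 4) = √√a := by
  rw [Real.sqrt_eq_rpow, Real.sqrt_eq_rpow, ← Real.rpow_mul ha]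
  norm_num

lemma gapRate_one [Nonempty ι] (hs : 0 < s) (hγ : ∀ i, 0 < γ i) (i : ι) :
    gapRate s γ ρ 1 i =
      √s * √(γ i) * √(1 + Fintype.card ι) / (Fintype.card ι : ℝ) ^ ((1 : ℝ) / 4) := by
  have hk : (0 : ℝ) < Fintype.card ι := Nat.cast_pos.2 Fintype.card_pos
  have hroot : √(Fintype.card ι : ℝ) + (√(Fintype.card ι))⁻¹ =
      (1 + Fintype.card ι) / √(Fintype.card ι) := by
    field_simp
    rw [Real.sq_sqrt hk.le, add_comm]
  have hgap : gapSq s γ ρ 1 i = s * γ i * ((1 + Fintype.card ι) / √(Fintype.card ι)) := by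
    simp [gapSq, aggregate_one, hroot]
  rw [gapRate, hgap, Real.sqrt_mul (mul_pos hs (hγ i)).le, Real.sqrt_mul hs.le,
    Real.sqrt_div (by positivity), rpow_one_fourth hk.le, mul_div_assoc]

lemma rateA_zero_one [Nonempty ι] (hs : 0 < s) (hγ : ∀ i, 0 < γ i) (i : ι) :
    rateA s γ ρ 0 1 i = (Fintype.card ι : ℝ) ^ ((1 : ℝ) / 4) / (2 * √(1 + Fintype.card ι)) *
      √(γ i) * √s⁻¹ := by
  have hi := hγ i
  have hrate : rateA s γ ρ 0 1 i = √(γ i) ^ 2 / (2 * gapRate s γ ρ 1 i) := by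
    rw [Real.sq_sqrt hi.le]
    simp [rateA, lossRate, one_add_one_eq_two, mul_comm]
  rw [hrate, gapRate_one hs hγ, Real.sqrt_inv]
  field_simp

lemma rateC_zero_one [Nonempty ι] (hs : 0 < s) (hγ : ∀ i, 0 < γ i) (i : ι) :
    rateC s γ ρ 0 1 i = 3 / (2 * (Fintype.card ι : ℝ) ^ ((1 : ℝ) / 4) * √(1 + Fintype.card ι)) *
      √(γ i) * √s := by
  have hi := hγ i
  have hk : (0 : ℝ) < Fintype.card ι := Nat.cast_pos.2 Fintype.card_pos
  have hrate : rateC s γ ρ 0 1 i = √s ^ 2 / ((Fintype.card ι : ℝ) ^ ((1 : ℝ) / 4)) ^ 2 *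
      rateA s γ ρ 0 1 i + gapRate s γ ρ 1 i / √(1 + Fintype.card ι) ^ 2 := by
    rw [rpow_one_fourth hk.le, Real.sq_sqrt hs.le, Real.sq_sqrt (Real.sqrt_nonneg _),
      Real.sq_sqrt (by positivity)]
    simp [rateC, aggregate_one]
  rw [hrate, rateA_zero_one hs hγ, gapRate_one hs hγ, Real.sqrt_inv]
  field_simp
  norm_num

theorem exists_curve_isEquilibrium_iff [Nonempty ι] (hσS : 0 < σS) (hσK : 0 < σK)
    (hγ : ∀ i, 0 < γ i) (ρ : ι → ℝ) :
    ∃ x : ℝ → ι → ℝ, x 0 = 1 ∧ DifferentiableAt ℝ x 0 ∧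
      ∀ᶠ d in 𝓝[>] 0, IsScaledEquilibrium (σK / σS) γ ρ (d ^ 2) (x d) ∧
        ∀ q, IsEquilibrium σS σK γ ρ (d ^ 2) q ↔ q = unscale (σK / σS) (x d) := by
  obtain ⟨x, hx0, hx, hiff⟩ := exists_curve_isScaledEquilibrium_iff (div_pos hσK hσS) hγ ρ
  refine ⟨x, hx0, hx, hiff.mono fun d hd => ⟨(hd _).2 rfl, fun q => ?_⟩⟩
  simp only [isEquilibrium_iff_exists_eq_unscale hσS hσK, hd, exists_eq_left]

theorem exists_eventually_isEquilibrium_iff_and_abs_sub_le [Nonempty ι] (hσS : 0 < σS)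
    (hσK : 0 < σK) (hγ : ∀ i, 0 < γ i) (ρ : ι → ℝ) :
    ∃ C > 0, ∀ᶠ d in 𝓝[>] (0 : ℝ), ∃ q,
      (∀ q', IsEquilibrium σS σK γ ρ (d ^ 2) q' ↔ q' = q) ∧
      (∀ i, 1 - discountedSqDecay σS σK ρ (d ^ 2) q i ≠ 0) ∧
      (∀ i, |coeffA σS σK γ ρ (d ^ 2) q i - d * rateA (σK / σS) γ ρ 0 1 i| ≤ C * d ^ 2) ∧
      ∀ i, |coeffC σS σK γ ρ (d ^ 2) q i - d * rateC (σK / σS) γ ρ 0 1 i| ≤ C * d ^ 2 := by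
  have hs : 0 < σK / σS := div_pos hσK hσS
  obtain ⟨x, hx0, hx, hiff⟩ := exists_curve_isEquilibrium_iff hσS hσK hγ ρ
  obtain ⟨CA, hCA, hA⟩ := exists_pos_eventually_abs_mul_sub_le
    ((contDiffAt_rateA_zero_one (ρ := ρ) hs hγ).differentiableAt one_ne_zero) hx0 hx
  obtain ⟨CC, -, hC⟩ := exists_pos_eventually_abs_mul_sub_le
    ((contDiffAt_rateC_zero_one (ρ := ρ) hs hγ).differentiableAt one_ne_zero) hx0 hx
  have hcurve := tendsto_prodMk_nhdsGT_zero hx0 hx.continuousAt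
  refine ⟨max CA CC, lt_max_of_lt_left hCA, ?_⟩
  filter_upwards [self_mem_nhdsWithin, hiff, hA, hC,
    hcurve.eventually (eventually_lossRate_pos (ρ := ρ) hs hγ)] with d hd ⟨hsol, hq⟩ hAd hCd hloss
  refine ⟨_, hq, fun i => ?_, fun i => ?_, fun i => ?_⟩
  · rw [hsol.one_sub_discountedSqDecay hσS.ne' hσK.ne' hd]
    exact (mul_pos hd (hloss i)).ne'
  · rw [hsol.coeffA_eq hσS.ne' hσK.ne' hd]
    exact (hAd i).trans (by gcongr; exact le_max_left _ _)
  · rw [hsol.coeffC_eq hσS.ne' hσK.ne' hd]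
    exact (hCd i).trans (by gcongr; exact le_max_right _ _)

theorem stmt10_general [Nonempty ι] (hσS : 0 < σS) (hσK : 0 < σK) (hγ : ∀ i, 0 < γ i)
    (ρ : ι → ℝ) :
    ∃ ε > 0, ∃ C > 0, ∀ Δt : ℝ, 0 < Δt → Δt < ε →
      ∃ q, (∀ q', IsEquilibrium σS σK γ ρ Δt q' ↔ q' = q) ∧
        (∀ i, 1 - discountedSqDecay σS σK ρ Δt q i ≠ 0) ∧
        (∀ i, |coeffA σS σK γ ρ Δt q i - (Fintype.card ι : ℝ) ^ ((1 : ℝ) / 4) /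
            (2 * √(1 + Fintype.card ι)) * √(γ i) * √(σS / σK) * √Δt| ≤ C * Δt) ∧
        (∀ i, |coeffC σS σK γ ρ Δt q i - 3 / (2 * (Fintype.card ι : ℝ) ^ ((1 : ℝ) / 4) *
            √(1 + Fintype.card ι)) * √(γ i) * √(σK / σS) * √Δt| ≤ C * Δt) := by
  have hs : 0 < σK / σS := div_pos hσK hσS
  obtain ⟨C, hC, h⟩ := exists_eventually_isEquilibrium_iff_and_abs_sub_le hσS hσK hγ ρ
  simp only [rateA_zero_one hs hγ, rateC_zero_one hs hγ, inv_div] at h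
  obtain ⟨δ, hδ, hq⟩ := (nhdsGT_basis (0 : ℝ)).eventually_iff.1 h
  refine ⟨δ ^ 2, by positivity, C, hC, fun Δt h0 h1 => ?_⟩
  simpa only [Real.sq_sqrt h0.le, mul_comm √Δt] using
    hq ⟨Real.sqrt_pos.2 h0, (Real.sqrt_lt' hδ).2 h1⟩

end Equilibrium

/-- for small `Δt > 0` and each `i`, the value-function coefficients
`A_i = (1−ρ_iΔt)(1−φ_i)²γ_iΔt / (1 − (1−ρ_iΔt)(1−φ_i)²)` and
`C_i = (1−ρ_iΔt)(β_i(1−φ_i)(A_i+γ_iΔt) + φ_i(1−λβ_Σ))` are well defined and satisfy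
`A_i = (k^{1/4}/(2(1+k)^{1/2}))γ_i^{1/2}(σ_S/σ_K)^{1/2}√Δt + O(Δt)` and
`C_i = (3/(2k^{1/4}(1+k)^{1/2}))γ_i^{1/2}(σ_K/σ_S)^{1/2}√Δt + O(Δt)`. -/
theorem stmt10 (k : ℕ) (hk : 1 ≤ k) (σS σK : ℝ) (hσS : 0 < σS) (hσK : 0 < σK)
    (γ ρ : Fin k → ℝ) (hγ : ∀ i, 0 < γ i) (hρ : ∀ i, 0 < ρ i) :
    ∃ ε > 0, ∃ C > 0, ∀ Δt : ℝ, 0 < Δt → Δt < ε →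
      ∃ (βSum lam : ℝ) (β φ A Ci : Fin k → ℝ),
        (βSum = ∑ j, β j ∧
          (∀ i, 0 = (1 - ρ i * Δt) * (β i) ^ 2 * βSum ^ 2
              - (2 - ρ i * Δt + βSum * γ i * Δt) * (σK / σS) ^ 2 * β i * βSum
              + (σK / σS) ^ 4 * (1 - β i * γ i * Δt)) ∧
          0 < βSum ∧
          (∀ i, 0 < β i * βSum ∧ β i * βSum ≤ σK ^ 2 / σS ^ 2)) ∧
        (∀ q : ℝ × (Fin k → ℝ),
          (q.1 = ∑ j, q.2 j ∧
            (∀ i, 0 = (1 - ρ i * Δt) * (q.2 i) ^ 2 * q.1 ^ 2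
                - (2 - ρ i * Δt + q.1 * γ i * Δt) * (σK / σS) ^ 2 * q.2 i * q.1
                + (σK / σS) ^ 4 * (1 - q.2 i * γ i * Δt)) ∧
            0 < q.1 ∧
            (∀ i, 0 < q.2 i * q.1 ∧ q.2 i * q.1 ≤ σK ^ 2 / σS ^ 2)) →
          q.1 = βSum ∧ q.2 = β) ∧
        lam = βSum * σS ^ 2 / (σK ^ 2 + βSum ^ 2 * σS ^ 2) ∧
        (∀ i, φ i = 1 - lam * β i / (1 - lam * βSum)) ∧
        (∀ i, 1 - (1 - ρ i * Δt) * (1 - φ i) ^ 2 ≠ 0) ∧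
        (∀ i, A i = (1 - ρ i * Δt) * (1 - φ i) ^ 2 * γ i * Δt
            / (1 - (1 - ρ i * Δt) * (1 - φ i) ^ 2)) ∧
        (∀ i, Ci i = (1 - ρ i * Δt)
            * (β i * (1 - φ i) * (A i + γ i * Δt) + φ i * (1 - lam * βSum))) ∧
        (∀ i, |A i - (k : ℝ) ^ ((1 : ℝ) / 4) / (2 * Real.sqrt (1 + k))
              * Real.sqrt (γ i) * Real.sqrt (σS / σK) * Real.sqrt Δt| ≤ C * Δt) ∧
        (∀ i, |Ci i - 3 / (2 * (k : ℝ) ^ ((1 : ℝ) / 4) * Real.sqrt (1 + k))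
              * Real.sqrt (γ i) * Real.sqrt (σK / σS) * Real.sqrt Δt| ≤ C * Δt) := by
  have : Nonempty (Fin k) := Fin.pos_iff_nonempty.1 hk
  obtain ⟨ε, hε, C, hC, h⟩ := stmt10_general hσS hσK hγ ρ
  simp only [Fintype.card_fin] at h
  refine ⟨ε, hε, C, hC, fun Δt h0 h1 => ?_⟩
  obtain ⟨q, hq, hden, hA, hCi⟩ := h Δt h0 h1
  exact ⟨q.1, _, q.2, _, _, _, (hq q).2 rfl, fun q' hq' => Prod.ext_iff.1 ((hq q').1 hq'), rfl,
    fun _ => rfl, hden, fun _ => rfl, fun _ => rfl, hA, hCi⟩
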